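/- For z, y ∈ k^×, the formulas defining N_3(z,y) endow the 3-dimensional k-vector space with an H_k-module structure, and the H_k-module N_3(z,y) is simple if and only if y^3 ≠ z. -/

import Mathlib

/-- The defining relations of the affine Hecke algebra of type `A_2` (for `Gl_3`),
on the free algebra on four generators `T = X 0`, `T⁻¹ = X 1`, `S_1 = X 2`, `S_2 = X 3`. -/
inductive HeckeRel (R : Type) [CommRing R] (q : R) :
    FreeAlgebra R (Fin 4) → FreeAlgebra R (Fin 4) → Prop
  | TTinv : HeckeRel R q (FreeAlgebra.ι R 0 * FreeAlgebra.ι R 1) 1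
  | TinvT : HeckeRel R q (FreeAlgebra.ι R 1 * FreeAlgebra.ι R 0) 1
  | quad : HeckeRel R q
      ((FreeAlgebra.ι R 2 + 1) * (FreeAlgebra.ι R 2 - algebraMap R (FreeAlgebra R (Fin 4)) q)) 0
  | T3S1 : HeckeRel R q (FreeAlgebra.ι R 0 ^ 3 * FreeAlgebra.ι R 2)
      (FreeAlgebra.ι R 2 * FreeAlgebra.ι R 0 ^ 3)
  | braid : HeckeRel R q (FreeAlgebra.ι R 2 * FreeAlgebra.ι R 3 * FreeAlgebra.ι R 2)
      (FreeAlgebra.ι R 3 * FreeAlgebra.ι R 2 * FreeAlgebra.ι R 3)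
  | TS2 : HeckeRel R q (FreeAlgebra.ι R 0 * FreeAlgebra.ι R 3)
      (FreeAlgebra.ι R 2 * FreeAlgebra.ι R 0)

/-- The affine Hecke algebra `H_R` with parameter `q ∈ R`. -/
abbrev HeckeAlg (R : Type) [CommRing R] (q : R) := RingQuot (HeckeRel R q)

namespace HeckeAlg

variable (R : Type) [CommRing R] (q : R)

noncomputable def gen (i : Fin 4) : HeckeAlg R q :=
  RingQuot.mkAlgHom R (HeckeRel R q) (FreeAlgebra.ι R i)

noncomputable def T : HeckeAlg R q := gen R q 0
noncomputable def Tinv : HeckeAlg R q := gen R q 1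
noncomputable def S1 : HeckeAlg R q := gen R q 2
noncomputable def S2 : HeckeAlg R q := gen R q 3

theorem T_mul_Tinv : T R q * Tinv R q = 1 := by
  simpa [T, Tinv, gen, map_mul, map_one] using
    RingQuot.mkAlgHom_rel R (HeckeRel.TTinv (R := R) (q := q))

theorem Tinv_mul_T : Tinv R q * T R q = 1 := by
  simpa [T, Tinv, gen, map_mul, map_one] using
    RingQuot.mkAlgHom_rel R (HeckeRel.TinvT (R := R) (q := q))

theorem quad_rel : (S1 R q + 1) * (S1 R q - algebraMap R (HeckeAlg R q) q) = 0 := by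
  simpa [S1, gen, map_mul, map_add, map_sub, map_one, map_zero, AlgHom.commutes] using
    RingQuot.mkAlgHom_rel R (HeckeRel.quad (R := R) (q := q))

theorem T3_mul_S1 : T R q ^ 3 * S1 R q = S1 R q * T R q ^ 3 := by
  simpa [T, S1, gen, map_mul, map_pow] using
    RingQuot.mkAlgHom_rel R (HeckeRel.T3S1 (R := R) (q := q))

theorem braid_rel : S1 R q * S2 R q * S1 R q = S2 R q * S1 R q * S2 R q := by
  simpa [S1, S2, gen, map_mul] using
    RingQuot.mkAlgHom_rel R (HeckeRel.braid (R := R) (q := q))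

theorem T_mul_S2 : T R q * S2 R q = S1 R q * T R q := by
  simpa [T, S1, S2, gen, map_mul] using
    RingQuot.mkAlgHom_rel R (HeckeRel.TS2 (R := R) (q := q))

/-- The canonical (base change) ring homomorphism `H_R → H_S` induced by a ring
homomorphism `R → S` sending the parameter `q` to the parameter `q'`. -/
noncomputable def map {R S : Type} [CommRing R] [CommRing S] (f : R →+* S) (q : R) (q' : S)
    (h : f q = q') : HeckeAlg R q →+* HeckeAlg S q' := by
  subst h
  letI : Algebra R (HeckeAlg S (f q)) :=
    RingHom.toAlgebra' ((algebraMap S (HeckeAlg S (f q))).comp f)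
      (fun c x => by simpa using Algebra.commutes (f c) x)
  refine RingQuot.lift
    ⟨((FreeAlgebra.lift R fun i => gen S (f q) i : _ →ₐ[R] HeckeAlg S (f q)) :
        FreeAlgebra R (Fin 4) →+* HeckeAlg S (f q)), ?_⟩
  have key : ∀ i : Fin 4,
      (FreeAlgebra.lift R fun j => gen S (f q) j) (FreeAlgebra.ι R i) = gen S (f q) i :=
    fun i => FreeAlgebra.lift_ι_apply _ _
  have keyq : (FreeAlgebra.lift R fun j => gen S (f q) j)
      (algebraMap R (FreeAlgebra R (Fin 4)) q) = algebraMap S (HeckeAlg S (f q)) (f q) := by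
    rw [AlgHom.commutes]
    rfl
  intro a b hab
  cases hab with
  | TTinv => simpa [key, T, Tinv] using T_mul_Tinv S (f q)
  | TinvT => simpa [key, T, Tinv] using Tinv_mul_T S (f q)
  | quad => simpa [key, keyq, S1] using quad_rel S (f q)
  | T3S1 => simpa [key, T, S1] using T3_mul_S1 S (f q)
  | braid => simpa [key, S1, S2] using braid_rel S (f q)
  | TS2 => simpa [key, T, S1, S2] using T_mul_S2 S (f q)

/-- `S_1⁻¹ = q⁻¹ (S_1 - q + 1)`, where `qi` is an inverse of `q` in `R`. -/
noncomputable def S1i (qi : R) : HeckeAlg R q :=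
  algebraMap R (HeckeAlg R q) qi * (S1 R q - algebraMap R (HeckeAlg R q) q + 1)

/-- `S_2⁻¹ = q⁻¹ (S_2 - q + 1)`, where `qi` is an inverse of `q` in `R`. -/
noncomputable def S2i (qi : R) : HeckeAlg R q :=
  algebraMap R (HeckeAlg R q) qi * (S2 R q - algebraMap R (HeckeAlg R q) q + 1)

/-- The Bernstein elements `Y_1 = q S_1⁻¹ S_2⁻¹ T`, `Y_2 = S_2⁻¹ T S_1`,
`Y_3 = q⁻¹ T S_1 S_2`, where `qi` is an inverse of `q` in `R`. -/
noncomputable def Y (qi : R) : Fin 3 → HeckeAlg R q :=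
  ![algebraMap R (HeckeAlg R q) q * S1i R q qi * S2i R q qi * T R q,
    S2i R q qi * T R q * S1 R q,
    algebraMap R (HeckeAlg R q) qi * T R q * S1 R q * S2 R q]

end HeckeAlg

noncomputable section

variable (p : ℕ) [Fact p.Prime] (k : Type) [Field k] [IsAlgClosed k] [CharP k p]

/-- `H_k = H ⊗_{ℤ[q]} k` with `q ↦ 0`. -/
abbrev Hk : Type := HeckeAlg k 0

/-- The action of `T` on a `1`-dimensional space: multiplication by `c`. -/
def Tmat1 (c : k) : Module.End k (Fin 1 → k) := Matrix.mulVecLin !![c]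

/-- The action of `T` on the `2`-dimensional space with basis `w, Tw` where
`T(Tw) = -y²w - yTw`. -/
def Tmat2 (y : k) : Module.End k (Fin 2 → k) := Matrix.mulVecLin !![0, -y^2; 1, -y]

/-- The action of `T` on the `3`-dimensional space with basis `v, Tv, T²v` where
`T(T²v) = zv`. -/
def Tmat3 (z : k) : Module.End k (Fin 3 → k) := Matrix.mulVecLin !![0, 0, z; 1, 0, 0; 0, 1, 0]

/-- The action of `T` on the `6`-dimensional space with basis `v, Tv, T²v, w, Tw, T²w`
where `T(T²v) = zv`, `T(T²w) = zw`. -/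
def Tmat6 (z : k) : Module.End k (Fin 6 → k) := Matrix.mulVecLin
  !![0, 0, z, 0, 0, 0;
     1, 0, 0, 0, 0, 0;
     0, 1, 0, 0, 0, 0;
     0, 0, 0, 0, 0, z;
     0, 0, 0, 1, 0, 0;
     0, 0, 0, 0, 1, 0]

/-- The action of `S_1` on `L_6(z,y)`: `S_1v = 0`, `S_1(Tv) = T²w`, `S_1(T²v) = -T²v`,
`S_1w = -w`, `S_1(Tw) = (y/z)T²v`, `S_1(T²w) = -T²w`. -/
def SL6 (z y : k) : Module.End k (Fin 6 → k) := Matrix.mulVecLin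
  !![0, 0, 0,  0,  0,     0;
     0, 0, 0,  0,  0,     0;
     0, 0, -1, 0,  y / z, 0;
     0, 0, 0,  -1, 0,     0;
     0, 0, 0,  0,  0,     0;
     0, 1, 0,  0,  0,     -1]

/-- The action of `S_1` on `L̃_6(z,y)`: as on `L_6(z,y)` except `S_1v = w`, `S_1(Tv) = 0`. -/
def SLt6 (z y : k) : Module.End k (Fin 6 → k) := Matrix.mulVecLin
  !![0, 0, 0,  0,  0,     0;
     0, 0, 0,  0,  0,     0;
     0, 0, -1, 0,  y / z, 0;
     1, 0, 0,  -1, 0,     0;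
     0, 0, 0,  0,  0,     0;
     0, 0, 0,  0,  0,     -1]

/-- The action of `S_1` on `K_6(z,y,y')`: `S_1v = w`, `S_1(Tv) = (y/y')T²w`,
`S_1(T²v) = -T²v`, `S_1w = -w`, `S_1(Tw) = (y'/z)T²v`, `S_1(T²w) = -T²w`. -/
def SK6 (z y y' : k) : Module.End k (Fin 6 → k) := Matrix.mulVecLin
  !![0, 0,      0,  0,  0,      0;
     0, 0,      0,  0,  0,      0;
     0, 0,      -1, 0,  y' / z, 0;
     1, 0,      0,  -1, 0,      0;
     0, 0,      0,  0,  0,      0;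
     0, y / y', 0,  0,  0,      -1]

/-- The action of `S_1` on `M_3(z,y)`: `S_1v = 0`, `S_1(Tv) = y⁻¹T²v`, `S_1(T²v) = -T²v`. -/
def SM3 (y : k) : Module.End k (Fin 3 → k) := Matrix.mulVecLin
  !![0, 0, 0; 0, 0, 0; 0, y⁻¹, -1]

/-- The action of `S_1` on `M̃_3(z,y)`: `S_1v = -v`, `S_1(Tv) = -y⁻¹T²v`, `S_1(T²v) = -T²v`. -/
def SMt3 (y : k) : Module.End k (Fin 3 → k) := Matrix.mulVecLin
  !![-1, 0, 0; 0, 0, 0; 0, -y⁻¹, -1]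

/-- The action of `S_1` on `N_3(z,y)`: `S_1v = -v`, `S_1(Tv) = 0`, `S_1(T²v) = -yTv - T²v`. -/
def SN3 (y : k) : Module.End k (Fin 3 → k) := Matrix.mulVecLin
  !![-1, 0, 0; 0, 0, -y; 0, 0, -1]

/-- The action of `S_1` on `Ñ_3(z,y)`: `S_1v = 0`, `S_1(Tv) = 0`, `S_1(T²v) = yTv - T²v`. -/
def SNt3 (y : k) : Module.End k (Fin 3 → k) := Matrix.mulVecLin
  !![0, 0, 0; 0, 0, y; 0, 0, -1]

/-- The action of `S_1` on `P_3(z)`: `S_1v = 0`, `S_1(Tv) = 0`, `S_1(T²v) = -T²v`. -/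
def SP3 : Module.End k (Fin 3 → k) := Matrix.mulVecLin
  !![0, 0, 0; 0, 0, 0; 0, 0, -1]

/-- The action of `S_1` on `P̃_3(z)`: `S_1v = -v`, `S_1(Tv) = 0`, `S_1(T²v) = -T²v`. -/
def SPt3 : Module.End k (Fin 3 → k) := Matrix.mulVecLin
  !![-1, 0, 0; 0, 0, 0; 0, 0, -1]

/-- The action of `S_1` on `M_2(y)`: `S_1w = -w`, `S_1(Tw) = 0`. -/
def SM2 : Module.End k (Fin 2 → k) := Matrix.mulVecLin !![-1, 0; 0, 0]

/-- The action of `S_1` on `M̃_2(y)`: `S_1w = 0`, `S_1(Tw) = -Tw`. -/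
def SMt2 : Module.End k (Fin 2 → k) := Matrix.mulVecLin !![0, 0; 0, -1]

end

/-!
The operators `T` and `S_1` satisfy the defining relations because `T³` is the scalar `z` and both
sides of the braid relation send `x` to `-x₂ u`, where `u = y²v + yTv + T²v`. By finite
dimension a `T`-stable subspace is `T⁻¹`-stable, so submodules are the subspaces stable under `T`
and `S_1`. Always `S_1 u = -u`, and `T u = y u` if `y³ = z`, so that `N_3(z,y)` is
then reducible. Conversely `(S_1 + 1) x = (x₁ - y x₂) Tv`: a submodule on which `x₁ - y x₂` does not
vanish contains the cyclic vector `Tv` of `T`, while one on which it vanishes consists, by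
`T`-stability, of vectors with `(y³ - z) x₂ = 0`, `x₁ = y x₂` and `x₀ = y x₁`.
-/

section InvariantSubmodule

open Module.End

variable {R M : Type*}

theorem mem_invtSubmodule_of_mul_eq_one [Ring R] [AddCommGroup M] [Module R M] [IsArtinian R M]
    {f g : Module.End R M} (hgf : g * f = 1) {W : Submodule R M} (hW : W ∈ invtSubmodule f) :
    W ∈ invtSubmodule g := by
  have hleft : Function.LeftInverse g f := LinearMap.congr_fun hgf
  have hinj : Function.Injective (f.restrict hW) := fun x y hxy ↦
    Subtype.ext <| hleft.injective <| congrArg Subtype.val hxy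
  intro x hx
  obtain ⟨w, hw⟩ := IsArtinian.surjective_of_injective_endomorphism _ hinj ⟨x, hx⟩
  obtain rfl : f w = x := congrArg Subtype.val hw
  simp [hleft (w : M)]

theorem mem_invtSubmodule_of_adjoin_eq_top {A : Type*} [CommSemiring R] [AddCommMonoid M]
    [Module R M] [Semiring A] [Algebra R A] (ρ : A →ₐ[R] Module.End R M) {s : Set A}
    (hs : Algebra.adjoin R s = ⊤) {W : Submodule R M} (hW : ∀ a ∈ s, W ∈ invtSubmodule (ρ a))
    (a : A) : W ∈ invtSubmodule (ρ a) := by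
  have ha : a ∈ Algebra.adjoin R s := hs ▸ Algebra.mem_top
  induction ha using Algebra.adjoin_induction with
  | mem a ha => exact hW a ha
  | algebraMap r => exact fun x hx ↦ by simpa using W.smul_mem r hx
  | add a b _ _ ha hb =>
    rw [map_add]
    exact invtSubmodule_inf_invtSubmodule_le_invtSubmodule_add _ _ ⟨ha, hb⟩
  | mul a b _ _ ha hb =>
    rw [map_mul]
    exact invtSubmodule.comp _ ha hb

theorem span_singleton_mem_invtSubmodule [Semiring R] [AddCommMonoid M] [Module R M]
    {f : Module.End R M} {c : R} {x : M} (h : f x = c • x) :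
    Submodule.span R {x} ∈ invtSubmodule f := by
  rw [mem_invtSubmodule, Submodule.span_singleton_le_iff_mem, Submodule.mem_comap, h]
  exact Submodule.smul_mem _ c (Submodule.mem_span_singleton_self x)

theorem span_singleton_ne_top_of_one_lt_finrank [Ring R] [StrongRankCondition R] [AddCommGroup M]
    [Module R M] (h : 1 < Module.finrank R M) (x : M) : Submodule.span R {x} ≠ ⊤ := fun htop ↦
  h.not_ge <| finrank_le_one x fun _ ↦ Submodule.mem_span_singleton.mp (htop ▸ Submodule.mem_top)

end InvariantSubmodule

namespace HeckeAlg

section Presentation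

variable {R : Type} [CommRing R] {q : R} {A : Type*} [Ring A] [Algebra R A]

/-- The universal property of `H_R`: an algebra homomorphism out of `H_R` is given by a unit `t`
(the image of `T`) and an element `s` (the image of `S_1`). The image of `S_2` is forced to be
`t⁻¹ * s * t`, so the relation `T S_2 = S_1 T` imposes no condition. -/
noncomputable def lift (t : Aˣ) (s : A) (hquad : (s + 1) * (s - algebraMap R A q) = 0)
    (hcomm : Commute ((t : A) ^ 3) s)
    (hbraid : s * (↑t⁻¹ * s * t) * s = ↑t⁻¹ * s * t * s * (↑t⁻¹ * s * t)) :
    HeckeAlg R q →ₐ[R] A :=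
  RingQuot.liftAlgHom R ⟨FreeAlgebra.lift R ![(t : A), ↑t⁻¹, s, ↑t⁻¹ * s * t], by
    rintro _ _ (_ | _ | _ | _ | _ | _)
    · simp
    · simp
    · simpa using hquad
    · simpa using hcomm.eq
    · simpa using hbraid
    · simp [mul_assoc]⟩

variable {t : Aˣ} {s : A} {hquad : (s + 1) * (s - algebraMap R A q) = 0}
  {hcomm : Commute ((t : A) ^ 3) s}
  {hbraid : s * (↑t⁻¹ * s * t) * s = ↑t⁻¹ * s * t * s * (↑t⁻¹ * s * t)}

@[simp]
theorem lift_T : lift t s hquad hcomm hbraid (T R q) = t := by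
  simp [lift, T, gen]

@[simp]
theorem lift_S1 : lift t s hquad hcomm hbraid (S1 R q) = s := by
  simp [lift, S1, gen]

variable (R q)

theorem S2_eq_Tinv_mul_S1_mul_T : S2 R q = Tinv R q * S1 R q * T R q := by
  rw [mul_assoc, ← T_mul_S2, ← mul_assoc, Tinv_mul_T, one_mul]

theorem adjoin_range_gen : Algebra.adjoin R (Set.range (gen R q)) = ⊤ := by
  have hgen : gen R q = RingQuot.mkAlgHom R (HeckeRel R q) ∘ FreeAlgebra.ι R := rfl
  rw [hgen, Set.range_comp, ← AlgHom.map_adjoin, FreeAlgebra.adjoin_range_ι, Algebra.map_top,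
    AlgHom.range_eq_top]
  exact RingQuot.mkAlgHom_surjective R _

theorem adjoin_T_Tinv_S1_eq_top : Algebra.adjoin R {T R q, Tinv R q, S1 R q} = ⊤ := by
  rw [eq_top_iff, ← adjoin_range_gen, Algebra.adjoin_le_iff]
  have hT : T R q ∈ Algebra.adjoin R {T R q, Tinv R q, S1 R q} :=
    Algebra.subset_adjoin (by simp)
  have hTinv : Tinv R q ∈ Algebra.adjoin R {T R q, Tinv R q, S1 R q} :=
    Algebra.subset_adjoin (by simp)
  have hS1 : S1 R q ∈ Algebra.adjoin R {T R q, Tinv R q, S1 R q} :=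
    Algebra.subset_adjoin (by simp)
  rintro _ ⟨i, rfl⟩
  fin_cases i
  · exact hT
  · exact hTinv
  · exact hS1
  · change S2 R q ∈ _
    rw [S2_eq_Tinv_mul_S1_mul_T]
    exact mul_mem (mul_mem hTinv hS1) hT

variable {R q}

theorem forall_mem_invtSubmodule_iff {M : Type*} [AddCommGroup M] [Module R M] [IsArtinian R M]
    (ρ : HeckeAlg R q →ₐ[R] Module.End R M) {W : Submodule R M} :
    (∀ a, W ∈ (ρ a).invtSubmodule) ↔
      W ∈ (ρ (T R q)).invtSubmodule ∧ W ∈ (ρ (S1 R q)).invtSubmodule := by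
  refine ⟨fun h ↦ ⟨h _, h _⟩, fun ⟨hT, hS1⟩ ↦ ?_⟩
  have hTinv : W ∈ (ρ (Tinv R q)).invtSubmodule :=
    mem_invtSubmodule_of_mul_eq_one (by rw [← map_mul, Tinv_mul_T, map_one]) hT
  apply mem_invtSubmodule_of_adjoin_eq_top ρ (adjoin_T_Tinv_S1_eq_top R q)
  rintro _ (rfl | rfl | rfl)
  exacts [hT, hTinv, hS1]

end Presentation

section N3

variable {k : Type} [Field k]

theorem Tmat3_apply (z : k) (x : Fin 3 → k) : Tmat3 k z x = ![z * x 2, x 0, x 1] := by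
  ext i
  fin_cases i <;> simp [Tmat3, Matrix.mulVec, dotProduct, Fin.sum_univ_three]

theorem SN3_apply (y : k) (x : Fin 3 → k) : SN3 k y x = ![-x 0, -(y * x 2), -x 2] := by
  ext i
  fin_cases i <;> simp [SN3, Matrix.mulVec, dotProduct, Fin.sum_univ_three]

theorem Tmat3_pow_three (z : k) : Tmat3 k z ^ 3 = algebraMap k _ z := by
  refine LinearMap.ext fun x ↦ ?_
  ext i
  fin_cases i <;> simp [pow_succ, Tmat3_apply]

theorem SN3_quadratic (y : k) : (SN3 k y + 1) * SN3 k y = 0 := by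
  refine LinearMap.ext fun x ↦ ?_
  ext i
  fin_cases i <;> simp [SN3_apply]

/-- The action of `T` on `N_3(z,y)` as a unit, with inverse `z⁻¹ T²`. -/
noncomputable def Tmat3Unit (z : kˣ) : (Module.End k (Fin 3 → k))ˣ where
  val := Tmat3 k z
  inv := (z : k)⁻¹ • Tmat3 k z ^ 2
  val_inv := by
    rw [mul_smul_comm, ← pow_succ', Tmat3_pow_three, Algebra.algebraMap_eq_smul_one,
      inv_smul_smul₀ z.ne_zero]
  inv_val := by
    rw [smul_mul_assoc, ← pow_succ, Tmat3_pow_three, Algebra.algebraMap_eq_smul_one,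
      inv_smul_smul₀ z.ne_zero]

@[simp]
theorem val_Tmat3Unit (z : kˣ) : (Tmat3Unit z : Module.End k (Fin 3 → k)) = Tmat3 k z := rfl

theorem Tmat3Unit_conj_SN3_apply (z : kˣ) (y : k) (x : Fin 3 → k) :
    (↑(Tmat3Unit z)⁻¹ * SN3 k y * Tmat3Unit z : Module.End k (Fin 3 → k)) x =
      ![-(y * x 1), -x 1, -x 2] := by
  have hinv : (↑(Tmat3Unit z)⁻¹ : Module.End k (Fin 3 → k)) = (z : k)⁻¹ • Tmat3 k z ^ 2 := rfl
  ext i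
  fin_cases i <;> simp [hinv, pow_two, Tmat3_apply, SN3_apply]

/-- The vector `y²v + yTv + T²v` of `N_3(z,y)`, in coordinates with respect to `v, Tv, T²v`. It is
an eigenvector of `S_1`, and also of `T` if `y³ = z`. -/
def commonEigenvector (y : k) : Fin 3 → k := ![y ^ 2, y, 1]

theorem Tmat3_commonEigenvector (y : k) :
    Tmat3 k (y ^ 3) (commonEigenvector y) = y • commonEigenvector y := by
  ext i
  fin_cases i <;> simp [Tmat3_apply, commonEigenvector] <;> ring

theorem SN3_commonEigenvector (y : k) :
    SN3 k y (commonEigenvector y) = (-1 : k) • commonEigenvector y := by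
  ext i
  fin_cases i <;> simp [SN3_apply, commonEigenvector]

theorem SN3_braid (z : kˣ) (y : k) :
    SN3 k y * (↑(Tmat3Unit z)⁻¹ * SN3 k y * Tmat3Unit z) * SN3 k y =
      ↑(Tmat3Unit z)⁻¹ * SN3 k y * Tmat3Unit z * SN3 k y *
        (↑(Tmat3Unit z)⁻¹ * SN3 k y * Tmat3Unit z) := by
  set S₂ : Module.End k (Fin 3 → k) := ↑(Tmat3Unit z)⁻¹ * SN3 k y * Tmat3Unit z
  have hS₂_apply (x : Fin 3 → k) : S₂ x = ![-(y * x 1), -x 1, -x 2] :=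
    Tmat3Unit_conj_SN3_apply z y x
  have hleft (x : Fin 3 → k) : (SN3 k y * S₂ * SN3 k y) x = -x 2 • commonEigenvector y := by
    ext i
    fin_cases i <;> simp [hS₂_apply, SN3_apply, commonEigenvector] <;> ring
  have hright (x : Fin 3 → k) : (S₂ * SN3 k y * S₂) x = -x 2 • commonEigenvector y := by
    ext i
    fin_cases i <;> simp [hS₂_apply, SN3_apply, commonEigenvector] <;> ring
  exact LinearMap.ext fun x ↦ (hleft x).trans (hright x).symm

/-- The representation of `H_k` on `N_3(z,y)`. -/
noncomputable def N3 (z : kˣ) (y : k) : Hk k →ₐ[k] Module.End k (Fin 3 → k) :=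
  lift (Tmat3Unit z) (SN3 k y) (by rw [map_zero, sub_zero, SN3_quadratic])
    (by rw [val_Tmat3Unit, Tmat3_pow_three]; exact Algebra.commute_algebraMap_left _ _)
    (SN3_braid z y)

theorem N3_T (z : kˣ) (y : k) : N3 z y (T k 0) = Tmat3 k z := lift_T

theorem N3_S1 (z : kˣ) (y : k) : N3 z y (S1 k 0) = SN3 k y := lift_S1

theorem SN3_apply_add_self (y : k) (x : Fin 3 → k) :
    SN3 k y x + x = (x 1 - y * x 2) • ![0, 1, 0] := by
  ext i
  fin_cases i <;> simp [SN3_apply]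
  ring

theorem eq_bot_of_mem_invtSubmodule_Tmat3 {y z : k} (hyz : y ^ 3 ≠ z)
    {W : Submodule k (Fin 3 → k)} (hT : W ∈ (Tmat3 k z).invtSubmodule)
    (hW : ∀ x ∈ W, x 1 = y * x 2) : W = ⊥ := by
  refine W.eq_bot_iff.mpr fun x hx ↦ ?_
  have h₁ : x 1 = y * x 2 := hW x hx
  have h₀ : x 0 = y * x 1 := by simpa [Tmat3_apply] using hW _ (hT hx)
  have hz : z * x 2 = y * x 0 := by simpa [Tmat3_apply] using hW _ (hT (hT hx))
  have h₂ : x 2 = 0 := by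
    have : (y ^ 3 - z) * x 2 = 0 := by linear_combination -hz - y * h₀ - y ^ 2 * h₁
    exact (mul_eq_zero.mp this).resolve_left (sub_ne_zero.mpr hyz)
  ext i
  fin_cases i <;> simp [h₀, h₁, h₂]

theorem eq_top_of_mem_invtSubmodule_Tmat3 {z : k} (hz : z ≠ 0) {W : Submodule k (Fin 3 → k)}
    (hT : W ∈ (Tmat3 k z).invtSubmodule) (hW : ![0, 1, 0] ∈ W) : W = ⊤ := by
  have h₂ : Tmat3 k z ![0, 1, 0] ∈ W := hT hW
  have h₀ : Tmat3 k z (Tmat3 k z ![0, 1, 0]) ∈ W := hT h₂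
  refine W.eq_top_iff'.mpr fun x ↦ ?_
  have hx : x = x 1 • ![0, 1, 0] + x 2 • Tmat3 k z ![0, 1, 0] +
      (x 0 * z⁻¹) • Tmat3 k z (Tmat3 k z ![0, 1, 0]) := by
    ext i
    fin_cases i <;> simp [Tmat3_apply, hz]
  rw [hx]
  exact W.add_mem (W.add_mem (W.smul_mem _ hW) (W.smul_mem _ h₂)) (W.smul_mem _ h₀)

theorem span_singleton_commonEigenvector_ne_bot (y : k) :
    Submodule.span k {commonEigenvector y} ≠ ⊥ := by
  rw [ne_eq, Submodule.span_singleton_eq_bot]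
  exact fun h ↦ one_ne_zero (congrFun h 2)

theorem eq_bot_or_eq_top_of_mem_invtSubmodule {y z : k} (hz : z ≠ 0) (hyz : y ^ 3 ≠ z)
    {W : Submodule k (Fin 3 → k)} (hT : W ∈ (Tmat3 k z).invtSubmodule)
    (hS : W ∈ (SN3 k y).invtSubmodule) : W = ⊥ ∨ W = ⊤ := by
  by_cases hW : ∀ x ∈ W, x 1 = y * x 2
  · exact .inl (eq_bot_of_mem_invtSubmodule_Tmat3 hyz hT hW)
  · push Not at hW
    obtain ⟨x, hx, hne⟩ := hW
    have hmem : (x 1 - y * x 2) • (![0, 1, 0] : Fin 3 → k) ∈ W :=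
      SN3_apply_add_self y x ▸ W.add_mem (hS hx) hx
    exact .inr (eq_top_of_mem_invtSubmodule_Tmat3 hz hT
      ((W.smul_mem_iff (sub_ne_zero.mpr hne)).mp hmem))

end N3

end HeckeAlg

open HeckeAlg in
theorem statement15_general (k : Type) [Field k] (z : kˣ) (y : k) :
    ∃ ρ : Hk k →ₐ[k] Module.End k (Fin 3 → k),
      ρ (HeckeAlg.T k 0) = Tmat3 k z ∧ ρ (HeckeAlg.S1 k 0) = SN3 k y ∧
      ((∀ W : Submodule k (Fin 3 → k), (∀ a : Hk k, ∀ x ∈ W, ρ a x ∈ W) → W = ⊥ ∨ W = ⊤) ↔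
        y ^ 3 ≠ (z : k)) := by
  refine ⟨N3 z y, N3_T z y, N3_S1 z y, ?_⟩
  have hinv (W : Submodule k (Fin 3 → k)) : (∀ a : Hk k, ∀ x ∈ W, N3 z y a x ∈ W) ↔
      W ∈ (Tmat3 k z).invtSubmodule ∧ W ∈ (SN3 k y).invtSubmodule := by
    rw [← N3_T z y, ← N3_S1 z y]
    exact forall_mem_invtSubmodule_iff (N3 z y)
  simp only [hinv]
  refine ⟨fun hsimple hyz ↦ ?_, fun hyz W hW ↦
    eq_bot_or_eq_top_of_mem_invtSubmodule z.ne_zero hyz hW.1 hW.2⟩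
  rcases hsimple _ ⟨span_singleton_mem_invtSubmodule (hyz ▸ Tmat3_commonEigenvector y),
    span_singleton_mem_invtSubmodule (SN3_commonEigenvector y)⟩ with h | h
  · exact span_singleton_commonEigenvector_ne_bot y h
  · exact span_singleton_ne_top_of_one_lt_finrank (by simp) _ h

/-- For `z, y ∈ k^×`, the formulas defining `N_3(z,y)` endow the `3`-dimensional `k`-vector space with an `H_k`-module structure, and the `H_k`-module `N_3(z,y)` is simple if and only if `y³ ≠ z`. -/
theorem statement15 (p : ℕ) [Fact p.Prime] (k : Type) [Field k] [IsAlgClosed k] [CharP k p]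
    (z y : kˣ) :
    ∃ ρ : Hk k →ₐ[k] Module.End k (Fin 3 → k),
      ρ (HeckeAlg.T k 0) = Tmat3 k z ∧ ρ (HeckeAlg.S1 k 0) = SN3 k y ∧
      ((∀ W : Submodule k (Fin 3 → k), (∀ a : Hk k, ∀ x ∈ W, ρ a x ∈ W) → W = ⊥ ∨ W = ⊤) ↔ ((y : k) ^ 3 ≠ (z : k))) :=
  statement15_general k z y
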